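/- Let c > 4/3, p3 = (2c)/3 − (1/3)*sqrt(c*(c−1)), xD = (2c)/3 − (1/3)*sqrt(c*(c−1)) − (1/3)*sqrt(c/(c−1)), R3 = {v ∈ T : v1 + v2 − p3 ≥ 0 and v1 + v2 − p3 ≥ v1/c + v2 − 2/3}, ν+ the pushforward of (2/c)·(Lebesgue measure on [xD, c]) under t ↦ (t, 1 − t/c), and ν− equal to (6/c) times Lebesgue measure restricted to R3. Then for every point v on the segment {(t, 1 − t/c) : xD ≤ t ≤ c} there exists a line ℓ through v with nonnegative slope (or a vertical line) such that the subset of R3 lying weakly above ℓ has equal ν+ measure and ν− measure. -/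

import Mathlib

open MeasureTheory Real

noncomputable section

/-- The triangle `T = {(v₁,v₂) : v₁ ≥ 0, v₂ ≥ 0, v₁/c + v₂ ≤ 1}`. -/
def Tri (c : ℝ) : Set (ℝ × ℝ) := {v | 0 ≤ v.1 ∧ 0 ≤ v.2 ∧ v.1 / c + v.2 ≤ 1}

/-!
Rotate a line about the boundary point `(t, 1 - t / c)` from horizontal to vertical. The `ν₊`-mass
above it stays equal to `(2 / c) * (t - xD)`, because the part of the hypotenuse weakly above it is
always `xD ≤ x ≤ t`, while the `ν₋`-mass above it varies continuously. Hence it suffices that the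
area of `R₃` above the line is at most `(t - xD) / 3` for the horizontal line and at least
`(t - xD) / 3` for the vertical one. Both are piecewise quadratic inequalities in `t`, and both are
equalities at `t = xD` and `t = c`: the choice of `p3` and `xD` balances the total masses.
-/

open Set Filter Topology

section Continuity

lemma continuousAt_measure_setOf_le {X Θ β : Type*} [MeasurableSpace X] {μ : Measure X}
    [IsFiniteMeasure μ] [TopologicalSpace Θ] [FirstCountableTopology Θ] [LinearOrder β]
    [TopologicalSpace β] [OrderClosedTopology β] [SecondCountableTopology β] [MeasurableSpace β]
    [OpensMeasurableSpace β] {f g : Θ → X → β} {θ₀ : Θ}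
    (hf_meas : ∀ θ, Measurable (f θ)) (hg_meas : ∀ θ, Measurable (g θ))
    (hf : ∀ x, ContinuousAt (f · x) θ₀) (hg : ∀ x, ContinuousAt (g · x) θ₀)
    (hne : ∀ᵐ x ∂μ, f θ₀ x ≠ g θ₀ x) :
    ContinuousAt (fun θ ↦ μ {x | f θ x ≤ g θ x}) θ₀ := by
  refine tendsto_measure_of_ae_tendsto_indicator_of_isFiniteMeasure _
    (measurableSet_le (hf_meas θ₀) (hg_meas θ₀))
    (fun θ ↦ measurableSet_le (hf_meas θ) (hg_meas θ)) ?_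
  filter_upwards [hne] with x hx
  rcases hx.lt_or_gt with hlt | hgt
  · filter_upwards [(hf x).eventually_lt (hg x) hlt] with θ hθ
    exact iff_of_true hθ.le hlt.le
  · filter_upwards [(hg x).eventually_lt (hf x) hgt] with θ hθ
    exact iff_of_false hθ.not_ge hgt.not_ge

lemma ae_notMem_line {a b : ℝ} (hab : (a, b) ≠ ((0 : ℝ), (0 : ℝ))) (q : ℝ × ℝ) :
    ∀ᵐ w : ℝ × ℝ, a * (w.1 - q.1) ≠ b * (w.2 - q.2) := by
  let φ : ℝ × ℝ →ₗ[ℝ] ℝ := a • LinearMap.fst ℝ ℝ ℝ - b • LinearMap.snd ℝ ℝ ℝ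
  have hφ : φ.ker ≠ ⊤ := fun h ↦ hab <| by
    have hzero : φ = 0 := LinearMap.ker_eq_top.1 h
    have ha : a = 0 := by simpa [φ] using LinearMap.congr_fun hzero (1, 0)
    have hb : b = 0 := by simpa [φ] using LinearMap.congr_fun hzero (0, 1)
    rw [ha, hb]
  have hnull : volume (AffineSubspace.mk' q φ.ker : Set (ℝ × ℝ)) = 0 := by
    refine Measure.addHaar_affineSubspace volume _ fun h ↦ hφ ?_
    rw [← AffineSubspace.direction_mk' q φ.ker, h, AffineSubspace.direction_top]
  filter_upwards [measure_eq_zero_iff_ae_notMem.1 hnull] with w hw heq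
  exact hw (by simpa [φ, sub_eq_zero, mul_sub] using heq)

/-- The closed half-plane weakly above the line `a * (w₁ - q₁) = b * (w₂ - q₂)` through `q`. For
`a, b ≥ 0` not both zero the line has slope `a / b`; it is vertical when `b = 0`, in which case
"above" means "to the left". -/
def weaklyAbove (a b : ℝ) (q : ℝ × ℝ) : Set (ℝ × ℝ) := {w | a * (w.1 - q.1) ≤ b * (w.2 - q.2)}

lemma measurableSet_weaklyAbove (a b : ℝ) (q : ℝ × ℝ) : MeasurableSet (weaklyAbove a b q) :=
  measurableSet_le (by fun_prop) (by fun_prop)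

lemma exists_measure_weaklyAbove_eq {μ : Measure (ℝ × ℝ)} [IsFiniteMeasure μ] (hμ : μ ≪ volume)
    (q : ℝ × ℝ) {A : ENNReal} (hhor : μ (weaklyAbove 0 1 q) ≤ A)
    (hvert : A ≤ μ (weaklyAbove 1 0 q)) :
    ∃ a b : ℝ, 0 ≤ a ∧ 0 ≤ b ∧ (a, b) ≠ ((0 : ℝ), (0 : ℝ)) ∧ μ (weaklyAbove a b q) = A := by
  have hne (θ : ℝ) : (θ, 1 - θ) ≠ ((0 : ℝ), (0 : ℝ)) := fun h ↦ by
    rw [Prod.mk.injEq] at h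
    linarith
  have hcont : Continuous fun θ : ℝ ↦ μ (weaklyAbove θ (1 - θ) q) :=
    continuous_iff_continuousAt.2 fun θ ↦ continuousAt_measure_setOf_le
      (fun _ ↦ by fun_prop) (fun _ ↦ by fun_prop) (fun _ ↦ by fun_prop) (fun _ ↦ by fun_prop)
      (hμ.ae_le (ae_notMem_line (hne θ) q))
  obtain ⟨θ, ⟨hθ₀, hθ₁⟩, hθ⟩ := intermediate_value_Icc zero_le_one hcont.continuousOn
    (show A ∈ Icc _ _ by simpa using ⟨hhor, hvert⟩)
  exact ⟨θ, 1 - θ, hθ₀, sub_nonneg.2 hθ₁, hne θ, hθ⟩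

end Continuity

section Area

lemma prod_volume_region_between_cc {α : Type*} [MeasurableSpace α] (μ : Measure α)
    {f g : α → ℝ} {s : Set α} (hf : Measurable f) (hg : Measurable g) (hs : MeasurableSet s) :
    μ.prod volume {v | v.1 ∈ s ∧ v.2 ∈ Icc (f v.1) (g v.1)}
      = ∫⁻ x in s, ENNReal.ofReal (g x - f x) ∂μ := by
  rw [Measure.prod_apply (measurableSet_region_between_cc hf hg hs), ← lintegral_indicator hs]
  congr with x
  by_cases hx : x ∈ s
  · rw [indicator_of_mem hx, ← Real.volume_Icc]
    congr with y
    simp [hx]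
  · rw [indicator_of_notMem hx]
    simp [hx]

lemma volume_region_between_cc_eq_intervalIntegral {f g : ℝ → ℝ} (hf : Continuous f)
    (hg : Continuous g) {a b : ℝ} (hab : a ≤ b) (hfg : ∀ x ∈ Icc a b, f x ≤ g x) :
    volume {v : ℝ × ℝ | v.1 ∈ Icc a b ∧ v.2 ∈ Icc (f v.1) (g v.1)}
      = ENNReal.ofReal (∫ x in a..b, (g x - f x)) := by
  rw [Measure.volume_eq_prod,
    prod_volume_region_between_cc _ hf.measurable hg.measurable measurableSet_Icc,
    intervalIntegral.integral_of_le hab, ← integral_Icc_eq_integral_Ioc,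
    ofReal_integral_eq_lintegral_ofReal (f := fun x ↦ g x - f x) (hg.sub hf).integrableOn_Icc]
  filter_upwards [ae_restrict_mem measurableSet_Icc] with x hx
  exact sub_nonneg.2 (hfg x hx)

lemma hasDerivAt_neg_max_sub_zero_sq_div_two {m x : ℝ} (hx : x ≠ m) :
    HasDerivAt (fun y ↦ -(max (m - y) 0) ^ 2 / 2) (max (m - x) 0) x := by
  rcases hx.lt_or_gt with hlt | hgt
  · have hloc : (fun y ↦ -(max (m - y) 0) ^ 2 / 2) =ᶠ[𝓝 x] fun y ↦ -(m - y) ^ 2 / 2 := by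
      filter_upwards [Iio_mem_nhds hlt] with y hy
      rw [max_eq_left (sub_nonneg.2 (le_of_lt hy))]
    rw [max_eq_left (sub_nonneg.2 hlt.le)]
    refine HasDerivAt.congr_of_eventuallyEq ?_ hloc
    convert! (((hasDerivAt_id x).const_sub m).pow 2).neg.div_const 2 using 1
    simp
  · have hloc : (fun y ↦ -(max (m - y) 0) ^ 2 / 2) =ᶠ[𝓝 x] fun _ ↦ 0 := by
      filter_upwards [Ioi_mem_nhds hgt] with y hy
      rw [max_eq_right (sub_nonpos.2 (le_of_lt hy))]
      simp
    rw [max_eq_right (sub_nonpos.2 hgt.le)]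
    exact (hasDerivAt_const x 0).congr_of_eventuallyEq hloc

lemma integral_max_sub_zero (m a b : ℝ) :
    ∫ x in a..b, max (m - x) 0 = ((max (m - a) 0) ^ 2 - (max (m - b) 0) ^ 2) / 2 := by
  rw [integral_eq_of_hasDerivAt_off_countable (fun y ↦ -(max (m - y) 0) ^ 2 / 2) _
    (countable_singleton m) (by fun_prop)
    (fun x hx ↦ hasDerivAt_neg_max_sub_zero_sq_div_two hx.2)
    (Continuous.intervalIntegrable (by fun_prop) a b)]
  ring

lemma integral_one_sub_div_sub_max (c p k d t : ℝ) :
    ∫ x in d..t, (1 - x / c - max (p - x) k)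
      = (1 - k) * (t - d) - (t ^ 2 - d ^ 2) / (2 * c)
        - ((max (p - k - d) 0) ^ 2 - (max (p - k - t) 0) ^ 2) / 2 := by
  have hsplit (x : ℝ) : 1 - x / c - max (p - x) k = 1 - k - x / c - max (p - k - x) 0 := by
    have hmax : max (p - x) k = max (p - k - x) 0 + k := by
      rw [← max_add_add_right, sub_right_comm, sub_add_cancel, zero_add]
    rw [hmax]
    ring
  have hint {f : ℝ → ℝ} (hf : Continuous f) : IntervalIntegrable f volume d t :=
    hf.intervalIntegrable d t
  simp_rw [hsplit]
  rw [intervalIntegral.integral_sub (hint (by fun_prop)) (hint (by fun_prop)),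
    intervalIntegral.integral_sub (hint (by fun_prop)) (hint (by fun_prop)),
    integral_max_sub_zero, intervalIntegral.integral_div, intervalIntegral.integral_const,
    integral_id, smul_eq_mul]
  ring

end Area

/-- The region `R₃` in the form used here: the part of the triangle under `x / c + y = 1` that lies
to the right of `x = d` and above `x + y = p`. -/
def bundleRegion (c d p : ℝ) : Set (ℝ × ℝ) :=
  {v | d ≤ v.1 ∧ 0 ≤ v.2 ∧ v.1 / c + v.2 ≤ 1 ∧ p ≤ v.1 + v.2}

/-- The part of `bundleRegion c d p` with `x ≤ t` and `y ≥ k`. The horizontal and the vertical cut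
through `(t, 1 - t / c)` are the cases `k = 1 - t / c` and `k = 0`. -/
def cutRegion (c d p t k : ℝ) : Set (ℝ × ℝ) :=
  {v | v.1 ∈ Icc d t ∧ v.2 ∈ Icc (max (p - v.1) k) (1 - v.1 / c)}

/-- The parametrization of the line `x / c + y = 1` by its first coordinate. -/
def hypotenuse (c x : ℝ) : ℝ × ℝ := (x, 1 - x / c)

/-- The conditions that determine the optimal `d = xD` and `p = p3` for `1 < c`: the left edge of
`bundleRegion c d p` has length `1 / 3`, and its area, a right triangle of height `1 - d / c` minus
an isosceles one of leg `p - d`, is a third of the length `c - d` of its projection to the first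
axis, so that the total `ν₊`- and `ν₋`-masses agree. -/
structure IsBalanced (c d p : ℝ) : Prop where
  one_lt : 1 < c
  lt : d < p
  left_edge : 1 - d / c - (p - d) = 1 / 3
  area : c * (1 - d / c) ^ 2 / 2 - (p - d) ^ 2 / 2 = (c - d) / 3

section Region

variable {c d p t : ℝ}

lemma measurableSet_bundleRegion (c d p : ℝ) : MeasurableSet (bundleRegion c d p) := by
  unfold bundleRegion
  measurability

lemma bundleRegion_subset_Icc (hc : 0 < c) :
    bundleRegion c d p ⊆ Icc (d, 0) (c, 1 - d / c) := by
  rintro ⟨x, y⟩ ⟨hdx, hy, hxy, -⟩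
  have hxc : x / c ≤ 1 := by linarith
  have hdxc : d / c ≤ x / c := div_le_div_of_nonneg_right hdx hc.le
  exact ⟨⟨hdx, hy⟩, (div_le_one hc).1 hxc, by linarith⟩

lemma volume_bundleRegion_lt_top (hc : 0 < c) : volume (bundleRegion c d p) < ⊤ :=
  (measure_mono (bundleRegion_subset_Icc hc)).trans_lt isCompact_Icc.measure_lt_top

lemma bundleRegion_inter_weaklyAbove_horizontal (hc : 0 < c) (htc : t ≤ c) :
    bundleRegion c d p ∩ weaklyAbove 0 1 (hypotenuse c t) = cutRegion c d p t (1 - t / c) := by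
  have ht1 : t / c ≤ 1 := (div_le_one hc).2 htc
  ext ⟨x, y⟩
  simp only [bundleRegion, weaklyAbove, hypotenuse, cutRegion, mem_inter_iff, mem_ofPred_eq,
    mem_Icc, max_le_iff]
  constructor
  · rintro ⟨⟨hdx, -, hxy, hp⟩, habove⟩
    have hxt : x ≤ t := (div_le_div_iff_of_pos_right hc).1 (by linarith)
    exact ⟨⟨hdx, hxt⟩, ⟨by linarith, by linarith⟩, by linarith⟩
  · rintro ⟨⟨hdx, -⟩, ⟨hp, hk⟩, hxy⟩
    exact ⟨⟨hdx, by linarith, by linarith, by linarith⟩, by linarith⟩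

lemma bundleRegion_inter_weaklyAbove_vertical (q : ℝ × ℝ) :
    bundleRegion c d p ∩ weaklyAbove 1 0 q = cutRegion c d p q.1 0 := by
  ext ⟨x, y⟩
  simp only [bundleRegion, weaklyAbove, cutRegion, mem_inter_iff, mem_ofPred_eq, mem_Icc,
    max_le_iff, one_mul, zero_mul, sub_nonpos, sub_le_iff_le_add (a := p), le_sub_iff_add_le',
    add_comm y]
  tauto

lemma hypotenuse_preimage_weaklyAbove {a b : ℝ} (hc : 0 < c) (ha : 0 ≤ a) (hb : 0 ≤ b)
    (hab : (a, b) ≠ ((0 : ℝ), (0 : ℝ))) :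
    hypotenuse c ⁻¹' weaklyAbove a b (hypotenuse c t) = Iic t := by
  have hpos : 0 < a + b / c := by
    rcases ha.lt_or_eq with ha | rfl
    · positivity
    · have hb : 0 < b := hb.lt_of_ne fun h ↦ hab (by rw [← h])
      positivity
  ext x
  have hfactor : b * (1 - x / c - (1 - t / c)) - a * (x - t) = (t - x) * (a + b / c) := by ring
  simp only [weaklyAbove, hypotenuse, mem_preimage, mem_ofPred_eq, mem_Iic]
  rw [← sub_nonneg, hfactor, mul_nonneg_iff_of_pos_right hpos, sub_nonneg]

end Region

section Inequalities

variable {c m u : ℝ}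

lemma third_le_vertical_cut_area (hc : 1 < c) (hm : 0 < m) (hbal : c * (m ^ 2 - 1 / 9) = m ^ 2)
    (hu : u ≤ c * (m + 1 / 3)) :
    u / 3 ≤ (m + 1 / 3) * u - u ^ 2 / (2 * c) - (m ^ 2 - (max (m - u) 0) ^ 2) / 2 := by
  have hc₀ : 0 < c := by linarith
  rcases le_total u m with hum | hmu
  · have hdiv : u ^ 2 / (2 * c) ≤ u ^ 2 / 2 :=
      div_le_div_of_nonneg_left (by positivity) (by norm_num) (by linarith)
    rw [max_eq_left (sub_nonneg.2 hum)]
    linarith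
  · -- The difference of the two sides is a concave quadratic in `u` with these roots.
    have hfactor : m * u - m ^ 2 / 2 - u ^ 2 / (2 * c)
        = (c * (m + 1 / 3) - u) * (u - c * (m - 1 / 3)) / (2 * c) := by
      field_simp
      linear_combination 9 * c * hbal
    have hroot : c * (m - 1 / 3) ≤ m := by
      have hprod : c * (m - 1 / 3) * (m + 1 / 3) = m ^ 2 := by linear_combination hbal
      refine le_of_mul_le_mul_right (a := m + 1 / 3) ?_ (by positivity)
      rw [hprod]
      linarith
    have hnonneg : 0 ≤ (c * (m + 1 / 3) - u) * (u - c * (m - 1 / 3)) / (2 * c) :=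
      div_nonneg (mul_nonneg (by linarith) (by linarith)) (mul_pos two_pos hc₀).le
    rw [max_eq_right (sub_nonpos.2 hmu)]
    linarith

lemma horizontal_cut_area_le_third (hc : 1 < c) (hbal : c * (m ^ 2 - 1 / 9) = m ^ 2)
    (hu₀ : 0 ≤ u) (hu₁ : u ≤ c * (m + 1 / 3)) :
    u ^ 2 / (2 * c) - (max (u / c - 1 / 3) 0) ^ 2 / 2 ≤ u / 3 := by
  have hc₀ : 0 < c := by linarith
  obtain ⟨w, rfl⟩ : ∃ w, u = c * (w + 1 / 3) := ⟨u / c - 1 / 3, by field_simp; ring⟩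
  have hw₀ : 0 ≤ w + 1 / 3 := nonneg_of_mul_nonneg_right hu₀ hc₀
  have hwm : w ≤ m := by linarith [le_of_mul_le_mul_left hu₁ hc₀]
  have hdiff : (c * (w + 1 / 3)) ^ 2 / (2 * c) - c * (w + 1 / 3) / 3 = c * (w ^ 2 - 1 / 9) / 2 := by
    field_simp
    ring
  rw [mul_div_cancel_left₀ _ hc₀.ne', add_sub_cancel_right]
  suffices h : c * (w ^ 2 - 1 / 9) ≤ (max w 0) ^ 2 by linarith
  rcases le_total w 0 with hw | hw
  · have hsq : w ^ 2 ≤ 1 / 9 := by nlinarith [hw₀]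
    rw [max_eq_right hw, zero_pow two_ne_zero]
    exact mul_nonpos_of_nonneg_of_nonpos hc₀.le (sub_nonpos.2 hsq)
  · have hsq : (c - 1) * w ^ 2 ≤ (c - 1) * m ^ 2 := by gcongr
    rw [max_eq_left hw]
    linarith

end Inequalities

namespace IsBalanced

variable {c d p t : ℝ}

lemma pos (h : IsBalanced c d p) : 0 < c := one_pos.trans h.one_lt

lemma sub_eq_mul (h : IsBalanced c d p) : c - d = c * (p - d + 1 / 3) := by
  have hheight : 1 - d / c = p - d + 1 / 3 := by linarith [h.left_edge]
  rw [← hheight, mul_sub, mul_one, mul_div_cancel₀ _ h.pos.ne']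

lemma mul_sq_sub_eq_sq (h : IsBalanced c d p) :
    c * ((p - d) ^ 2 - 1 / 9) = (p - d) ^ 2 := by
  have hheight : 1 - d / c = p - d + 1 / 3 := by linarith [h.left_edge]
  have harea := h.area
  rw [hheight, h.sub_eq_mul] at harea
  linear_combination 2 * harea

lemma nonneg (h : IsBalanced c d p) (hc : 4 / 3 ≤ c) : 0 ≤ d := by
  have hsq : (p - d) ^ 2 ≤ (2 / 3) ^ 2 := by nlinarith [h.mul_sq_sub_eq_sq]
  have hle : p - d ≤ 2 / 3 := le_of_sq_le_sq hsq (by norm_num)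
  have hd : d = c * (2 / 3 - (p - d)) := by linarith [h.sub_eq_mul]
  linarith [mul_nonneg h.pos.le (sub_nonneg.2 hle)]

lemma hypotenuse_mem_bundleRegion (h : IsBalanced c d p) (ht : t ∈ Icc d c) :
    hypotenuse c t ∈ bundleRegion c d p := by
  have htc : t / c ≤ 1 := (div_le_one h.pos).2 ht.2
  have hdiv : (t - d) / c ≤ t - d := div_le_self (sub_nonneg.2 ht.1) h.one_lt.le
  rw [sub_div] at hdiv
  refine ⟨ht.1, ?_, ?_, ?_⟩ <;> simp only [hypotenuse] <;> linarith [h.left_edge]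

lemma volume_cutRegion {k : ℝ} (h : IsBalanced c d p) (ht : t ∈ Icc d c) (hk : k ≤ 1 - t / c) :
    volume (cutRegion c d p t k)
      = ENNReal.ofReal ((1 - k) * (t - d) - (t ^ 2 - d ^ 2) / (2 * c)
        - ((max (p - k - d) 0) ^ 2 - (max (p - k - t) 0) ^ 2) / 2) := by
  rw [← integral_one_sub_div_sub_max]
  refine volume_region_between_cc_eq_intervalIntegral (f := fun x ↦ max (p - x) k)
    (g := fun x ↦ 1 - x / c) (by fun_prop) (by fun_prop) ht.1 fun x hx ↦ max_le ?_ ?_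
  · have hmem := h.hypotenuse_mem_bundleRegion ⟨hx.1, hx.2.trans ht.2⟩
    exact sub_le_iff_le_add'.2 hmem.2.2.2
  · have hdiv : x / c ≤ t / c := div_le_div_of_nonneg_right hx.2 h.pos.le
    linarith

lemma volume_horizontal_cut_le (h : IsBalanced c d p) (ht : t ∈ Icc d c) :
    volume (bundleRegion c d p ∩ weaklyAbove 0 1 (hypotenuse c t))
      ≤ ENNReal.ofReal ((t - d) / 3) := by
  have hc := h.pos
  have hdt : 0 ≤ t - d := sub_nonneg.2 ht.1
  have hdiv : (t - d) / c ≤ t - d := div_le_self hdt h.one_lt.le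
  have hedge := h.left_edge
  have hleft : p - (1 - t / c) - d = (t - d) / c - 1 / 3 := by
    rw [sub_div]
    linarith
  have hright : p - (1 - t / c) - t ≤ 0 := by linarith
  rw [bundleRegion_inter_weaklyAbove_horizontal hc ht.2, h.volume_cutRegion ht le_rfl, hleft,
    max_eq_right hright]
  refine ENNReal.ofReal_le_ofReal ?_
  have htriangle : (1 - (1 - t / c)) * (t - d) - (t ^ 2 - d ^ 2) / (2 * c)
      = (t - d) ^ 2 / (2 * c) := by
    field_simp
    ring
  have hineq := horizontal_cut_area_le_third h.one_lt h.mul_sq_sub_eq_sq hdt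
    (by linarith [h.sub_eq_mul, ht.2])
  linarith

lemma le_volume_vertical_cut (h : IsBalanced c d p) (ht : t ∈ Icc d c) :
    ENNReal.ofReal ((t - d) / 3)
      ≤ volume (bundleRegion c d p ∩ weaklyAbove 1 0 (hypotenuse c t)) := by
  have hc := h.pos
  have hk : 0 ≤ 1 - t / c := sub_nonneg.2 ((div_le_one hc).2 ht.2)
  rw [bundleRegion_inter_weaklyAbove_vertical, show (hypotenuse c t).1 = t from rfl,
    h.volume_cutRegion ht hk, sub_zero, sub_zero, max_eq_left (sub_nonneg.2 h.lt.le)]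
  refine ENNReal.ofReal_le_ofReal ?_
  have htrapezoid : 1 * (t - d) - (t ^ 2 - d ^ 2) / (2 * c)
      = (p - d + 1 / 3) * (t - d) - (t - d) ^ 2 / (2 * c) := by
    have hheight : p - d + 1 / 3 = 1 - d / c := by linarith [h.left_edge]
    rw [hheight]
    field_simp
    ring
  have hineq := third_le_vertical_cut_area h.one_lt (sub_pos.2 h.lt) h.mul_sq_sub_eq_sq
    (u := t - d) (by linarith [h.sub_eq_mul, ht.2])
  rw [sub_sub_sub_cancel_right] at hineq
  rwa [htrapezoid]

lemma exists_volume_inter_weaklyAbove_eq (h : IsBalanced c d p) (ht : t ∈ Icc d c) :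
    ∃ a b : ℝ, 0 ≤ a ∧ 0 ≤ b ∧ (a, b) ≠ ((0 : ℝ), (0 : ℝ)) ∧
      volume (bundleRegion c d p ∩ weaklyAbove a b (hypotenuse c t))
        = ENNReal.ofReal ((t - d) / 3) := by
  have : IsFiniteMeasure (volume.restrict (bundleRegion c d p)) :=
    isFiniteMeasure_restrict.2 (volume_bundleRegion_lt_top h.pos).ne
  have hrestrict (a b : ℝ) : volume.restrict (bundleRegion c d p) (weaklyAbove a b (hypotenuse c t))
      = volume (bundleRegion c d p ∩ weaklyAbove a b (hypotenuse c t)) := by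
    rw [Measure.restrict_apply (measurableSet_weaklyAbove a b _), inter_comm]
  simp_rw [← hrestrict]
  refine exists_measure_weaklyAbove_eq Measure.absolutelyContinuous_restrict _ ?_ ?_
  · exact (hrestrict 0 1).trans_le (h.volume_horizontal_cut_le ht)
  · exact (h.le_volume_vertical_cut ht).trans_eq (hrestrict 1 0).symm

lemma map_hypotenuse_inter_weaklyAbove {a b : ℝ} (h : IsBalanced c d p) (ht : t ∈ Icc d c)
    (ha : 0 ≤ a) (hb : 0 ≤ b) (hab : (a, b) ≠ ((0 : ℝ), (0 : ℝ))) :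
    (volume.restrict (Icc d c)).map (hypotenuse c)
        (bundleRegion c d p ∩ weaklyAbove a b (hypotenuse c t))
      = ENNReal.ofReal (t - d) := by
  have hmeas : Measurable (hypotenuse c) := by unfold hypotenuse; fun_prop
  rw [Measure.map_apply hmeas
      ((measurableSet_bundleRegion c d p).inter (measurableSet_weaklyAbove a b _)),
    Measure.restrict_apply' measurableSet_Icc, preimage_inter,
    hypotenuse_preimage_weaklyAbove h.pos ha hb hab, ← Real.volume_Icc]
  congr 1
  ext x
  constructor
  · rintro ⟨⟨-, hxt⟩, hdx, -⟩
    exact ⟨hdx, hxt⟩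
  · rintro ⟨hdx, hxt⟩
    have hx : x ∈ Icc d c := ⟨hdx, hxt.trans ht.2⟩
    exact ⟨⟨h.hypotenuse_mem_bundleRegion hx, hxt⟩, hx⟩

lemma setOf_mem_Tri_eq_bundleRegion (h : IsBalanced c d p) (hd : 0 ≤ d) :
    {v ∈ Tri c | 0 ≤ v.1 + v.2 - p ∧ v.1 / c + v.2 - 2 / 3 ≤ v.1 + v.2 - p}
      = bundleRegion c d p := by
  have hslope : 0 < 1 - 1 / c := sub_pos.2 ((div_lt_one h.pos).2 h.one_lt)
  ext ⟨x, y⟩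
  have hprefer : x / c + y - 2 / 3 ≤ x + y - p ↔ d ≤ x := by
    have hfactor : x + y - p - (x / c + y - 2 / 3) = (x - d) * (1 - 1 / c) := by
      linear_combination h.left_edge
    rw [← sub_nonneg, hfactor, mul_nonneg_iff_of_pos_right hslope, sub_nonneg]
  simp only [Tri, bundleRegion, mem_ofPred_eq, hprefer, sub_nonneg]
  constructor
  · rintro ⟨⟨-, hy, hxy⟩, hp, hdx⟩
    exact ⟨hdx, hy, hxy, hp⟩
  · rintro ⟨hdx, hy, hxy, hp⟩
    exact ⟨⟨hd.trans hdx, hy, hxy⟩, hp, hdx⟩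

end IsBalanced

lemma isBalanced_sqrt {c : ℝ} (hc : 1 < c) :
    IsBalanced c (2 * c / 3 - √(c * (c - 1)) / 3 - √(c / (c - 1)) / 3)
      (2 * c / 3 - √(c * (c - 1)) / 3) := by
  have hc₀ : 0 < c := by linarith
  have hc₁ : 0 < c - 1 := by linarith
  have hsqrt : √(c * (c - 1)) = √(c / (c - 1)) * (c - 1) := by
    rw [← Real.sqrt_sq hc₁.le, ← Real.sqrt_mul (by positivity), Real.sqrt_sq hc₁.le]
    congr 1
    field_simp
  have hsq : √(c / (c - 1)) ^ 2 * (c - 1) = c := by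
    rw [Real.sq_sqrt (by positivity), div_mul_cancel₀ _ hc₁.ne']
  have hpos : 0 < √(c / (c - 1)) := Real.sqrt_pos.2 (div_pos hc₀ hc₁)
  rw [hsqrt]
  generalize √(c / (c - 1)) = r at hsq hpos
  refine ⟨hc, by linarith, ?_, ?_⟩
  · field_simp
    ring
  · field_simp
    linear_combination c * hsq

/-- for `c > 4/3` and every point `v = (t, 1 - t/c)` on the upper
boundary of `R₃`, there is a line through `v` with nonnegative slope (or a
vertical line) such that the part of `R₃` weakly above the line has equal `ν₊`
and `ν₋` measures.  The line through `v` is `{w | a*(w₁ - t) = b*(w₂ - v₂)}`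
with `a, b ≥ 0` not both zero (slope `a/b`, vertical when `b = 0`), and the
region weakly above it is `{w | a*(w₁ - t) ≤ b*(w₂ - v₂)}`. -/
theorem exists_balancing_line (c : ℝ) (hc : 4 / 3 < c) :
    let p3 : ℝ := 2 * c / 3 - Real.sqrt (c * (c - 1)) / 3
    let xD : ℝ := 2 * c / 3 - Real.sqrt (c * (c - 1)) / 3 - Real.sqrt (c / (c - 1)) / 3
    let R3 : Set (ℝ × ℝ) :=
      {v ∈ Tri c | 0 ≤ v.1 + v.2 - p3 ∧ v.1 / c + v.2 - 2 / 3 ≤ v.1 + v.2 - p3}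
    let νp : Measure (ℝ × ℝ) :=
      Measure.map (fun t : ℝ => (t, 1 - t / c))
        (ENNReal.ofReal (2 / c) • volume.restrict (Set.Icc xD c))
    let νm : Measure (ℝ × ℝ) := ENNReal.ofReal (6 / c) • volume.restrict R3
    ∀ t ∈ Set.Icc xD c,
      ∃ a b : ℝ, 0 ≤ a ∧ 0 ≤ b ∧ (a, b) ≠ ((0 : ℝ), (0 : ℝ)) ∧
        νp {w ∈ R3 | a * (w.1 - t) ≤ b * (w.2 - (1 - t / c))}
          = νm {w ∈ R3 | a * (w.1 - t) ≤ b * (w.2 - (1 - t / c))} := by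
  intro p3 xD R3 νp νm t ht
  have hbal : IsBalanced c xD p3 := isBalanced_sqrt (by linarith)
  have hR3 : R3 = bundleRegion c xD p3 :=
    hbal.setOf_mem_Tri_eq_bundleRegion (hbal.nonneg hc.le)
  obtain ⟨a, b, ha, hb, hab, hvol⟩ := hbal.exists_volume_inter_weaklyAbove_eq ht
  refine ⟨a, b, ha, hb, hab, ?_⟩
  change νp (R3 ∩ weaklyAbove a b (hypotenuse c t)) = νm (R3 ∩ weaklyAbove a b (hypotenuse c t))
  have hνp : νp (R3 ∩ weaklyAbove a b (hypotenuse c t))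
      = ENNReal.ofReal (2 / c) * ENNReal.ofReal (t - xD) := by
    rw [hR3, ← hbal.map_hypotenuse_inter_weaklyAbove ht ha hb hab, ← smul_eq_mul,
      ← Measure.smul_apply, ← Measure.map_smul]
    rfl
  have hνm : νm (R3 ∩ weaklyAbove a b (hypotenuse c t))
      = ENNReal.ofReal (6 / c) * ENNReal.ofReal ((t - xD) / 3) := by
    rw [Measure.smul_apply, Measure.restrict_eq_self _ inter_subset_left, hR3, hvol, smul_eq_mul]
  rw [hνp, hνm, ← ENNReal.ofReal_mul (div_nonneg zero_le_two hbal.pos.le),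
    ← ENNReal.ofReal_mul (div_nonneg (by norm_num) hbal.pos.le)]
  congr 1
  ring
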